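/- For every z ∈ ℂ∖[−1,1] the (convergent improper) integral identity ∫_{−1}^{1} s/( √(1 − s²)·(z − s) ) ds = π·( z/S(z) − 1 ) = π·(z − S(z))/S(z) holds; consequently the Szegő function of the weight e^{iωx}, D(z) = exp( (S(z)/(2π)) ∫_{−1}^{1} (iωs)/( √(1 − s²)·(z − s) ) ds ), equals exp( iω/(2(z + S(z))) ). -/

import Mathlib

/-!
The substitution `s = cos θ` turns the integral into `∫₀^π cos θ / (z - cos θ) dθ`. Put
`w = z - S z`. Since `S z ^ 2 = z ^ 2 - 1`, one has `w * (z + S z) = 1`, whence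
`2 w (z - cos θ) = (1 - w e^{iθ}) (1 - w e^{-iθ})` and the partial fraction decomposition

  `S z / (z - cos θ) = 1 / (1 - w e^{iθ}) + 1 / (1 - w e^{-iθ}) - 1`.

The choice of branches in `S` gives `|w| < 1` off `[-1, 1]` (`norm_sub_S_lt_one`), so
`ζ ↦ 1 / (1 - w ζ)` is holomorphic on the closed unit disc and its mean over the unit circle is its
value `1` at the centre. Hence `∫₀^π dθ / (z - cos θ) = π / S z`, and
`cos θ / (z - cos θ) = z / (z - cos θ) - 1` yields the integral identity. The formula for the Szegő
function follows from `z - S z = 1 / (z + S z)`.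
-/

/-- `S(z) = √(z−1)·√(z+1)`, principal branches. -/
noncomputable def S (z : ℂ) : ℂ := (z - 1) ^ (1 / 2 : ℂ) * (z + 1) ^ (1 / 2 : ℂ)

/-- The real interval `[−1, 1]` viewed as a subset of `ℂ`. -/
def realSeg : Set ℂ := {z : ℂ | z.im = 0 ∧ -1 ≤ z.re ∧ z.re ≤ 1}

open MeasureTheory

theorem cpow_half_sq (x : ℂ) : (x ^ (1 / 2 : ℂ)) ^ 2 = x := by
  rw [← Complex.cpow_nat_mul]; norm_num

theorem cpow_half_re_nonneg (x : ℂ) : 0 ≤ (x ^ (1 / 2 : ℂ)).re := by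
  by_cases hx : x = 0
  · simp [hx]
  rw [Complex.cpow_def_of_ne_zero hx, Complex.exp_re]
  refine mul_nonneg (Real.exp_pos _).le (Real.cos_nonneg_of_mem_Icc ?_)
  have h1 := Complex.neg_pi_lt_arg x
  have h2 := Complex.arg_le_pi x
  have : (Complex.log x * (1 / 2 : ℂ)).im = x.arg / 2 := by
    simp [Complex.mul_im, Complex.log_im]; ring
  rw [this]
  constructor <;> linarith

theorem cpow_half_of_pos {r : ℝ} (hr : 0 < r) : ((r : ℂ) ^ (1 / 2 : ℂ)) = (Real.sqrt r : ℂ) := by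
  rw [Real.sqrt_eq_rpow, Complex.ofReal_cpow hr.le]; norm_num

theorem cpow_half_of_neg {r : ℝ} (hr : r < 0) :
    ((r : ℂ) ^ (1 / 2 : ℂ)) = (Real.sqrt (-r) : ℂ) * Complex.I := by
  rw [Complex.ofReal_cpow_of_nonpos hr.le, ← Complex.ofReal_neg, cpow_half_of_pos (neg_pos.2 hr)]
  congr 1
  rw [show (Real.pi : ℂ) * Complex.I * (1 / 2) = Real.pi / 2 * Complex.I by ring,
    Complex.exp_pi_div_two_mul_I]

/-- The branches are compatible: off `[-1, 1]`, the numbers `√(z - 1)` and `√(z + 1)` lie strictly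
within a right angle of each other. -/
theorem re_sqrt_mul_conj_pos {z : ℂ} (hz : z ∉ realSeg) :
    0 < ((z - 1) ^ (1 / 2 : ℂ)).re * ((z + 1) ^ (1 / 2 : ℂ)).re +
      ((z - 1) ^ (1 / 2 : ℂ)).im * ((z + 1) ^ (1 / 2 : ℂ)).im := by
  by_cases him : z.im = 0
  · obtain ⟨x, rfl⟩ : ∃ x : ℝ, z = x := ⟨z.re, by apply Complex.ext <;> simp [him]⟩
    have hx : x < -1 ∨ 1 < x := by
      by_contra! h
      exact hz ⟨by simp, by simpa using h.1, by simpa using h.2⟩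
    rw [show (x : ℂ) - 1 = ((x - 1 : ℝ) : ℂ) by push_cast; rfl,
      show (x : ℂ) + 1 = ((x + 1 : ℝ) : ℂ) by push_cast; rfl]
    rcases hx with hx | hx
    · rw [cpow_half_of_neg (by linarith), cpow_half_of_neg (by linarith)]
      have h1 : 0 < Real.sqrt (-(x - 1)) := Real.sqrt_pos.2 (by linarith)
      have h2 : 0 < Real.sqrt (-(x + 1)) := Real.sqrt_pos.2 (by linarith)
      simpa only [Complex.mul_re, Complex.mul_im, Complex.ofReal_re, Complex.ofReal_im,
        Complex.I_re, Complex.I_im, mul_zero, mul_one, zero_mul, sub_zero, add_zero, zero_add]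
        using mul_pos h1 h2
    · rw [cpow_half_of_pos (by linarith), cpow_half_of_pos (by linarith)]
      have h1 : 0 < Real.sqrt (x - 1) := Real.sqrt_pos.2 (by linarith)
      have h2 : 0 < Real.sqrt (x + 1) := Real.sqrt_pos.2 (by linarith)
      simpa only [Complex.ofReal_re, Complex.ofReal_im, mul_zero, add_zero] using mul_pos h1 h2
  · have ha := congrArg Complex.im (cpow_half_sq (z - 1))
    have hb := congrArg Complex.im (cpow_half_sq (z + 1))
    have ha0 := cpow_half_re_nonneg (z - 1)
    have hb0 := cpow_half_re_nonneg (z + 1)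
    generalize (z - 1) ^ (1 / 2 : ℂ) = a at *
    generalize (z + 1) ^ (1 / 2 : ℂ) = b at *
    simp only [sq, Complex.mul_im, Complex.sub_im, Complex.add_im, Complex.one_im, sub_zero,
      add_zero] at ha hb
    have ha1 : 0 < a.re := lt_of_le_of_ne ha0 fun h => him (by rw [← ha, ← h]; ring)
    have hb1 : 0 < b.re := lt_of_le_of_ne hb0 fun h => him (by rw [← hb, ← h]; ring)
    have hp : 0 < a.re * b.re := mul_pos ha1 hb1
    -- `(2 Re a Im a) (2 Re b Im b) = (Im z)²`, so `Im a` and `Im b` have the same sign.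
    have hq : 0 < (a.re * b.re) * (a.im * b.im) := by
      have : (a.re * b.re) * (a.im * b.im) = z.im ^ 2 / 4 := by
        have ha' : a.re * a.im = z.im / 2 := by linarith
        have hb' : b.re * b.im = z.im / 2 := by linarith
        linear_combination (b.re * b.im) * ha' + z.im / 2 * hb'
      rw [this]; positivity
    have := (mul_pos_iff_of_pos_left hp).1 hq
    linarith

theorem S_sq (z : ℂ) : S z ^ 2 = z ^ 2 - 1 := by
  rw [S, mul_pow, cpow_half_sq, cpow_half_sq]; ring

theorem S_ne_zero {z : ℂ} (hz : z ∉ realSeg) : S z ≠ 0 := by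
  intro h
  have h2 := S_sq z
  rw [h] at h2
  have h3 : (z - 1) * (z + 1) = 0 := by linear_combination -h2
  rcases mul_eq_zero.1 h3 with h | h
  · exact hz (by rw [sub_eq_zero.1 h]; simp [realSeg])
  · exact hz (by rw [eq_neg_of_add_eq_zero_left h]; simp [realSeg])

theorem sub_S_mul_add_S (z : ℂ) : (z - S z) * (z + S z) = 1 := by
  linear_combination -(S_sq z)

theorem norm_sub_S_lt_one {z : ℂ} (hz : z ∉ realSeg) : ‖z - S z‖ < 1 := by
  have hab := re_sqrt_mul_conj_pos hz
  have ha := cpow_half_sq (z - 1)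
  have hb := cpow_half_sq (z + 1)
  have hmul := congrArg norm (sub_S_mul_add_S z)
  rw [norm_mul, norm_one] at hmul
  -- With `a = √(z - 1)` and `b = √(z + 1)`: `z ∓ S z = (a ∓ b)² / 2`.
  have hlt : ‖z - S z‖ < ‖z + S z‖ := by
    unfold S
    generalize (z - 1) ^ (1 / 2 : ℂ) = a at *
    generalize (z + 1) ^ (1 / 2 : ℂ) = b at *
    rw [show z - a * b = (a - b) ^ 2 / 2 by linear_combination (-ha - hb) / 2,
      show z + a * b = (a + b) ^ 2 / 2 by linear_combination (-ha - hb) / 2,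
      norm_div, norm_div, norm_pow, norm_pow, ← Complex.normSq_eq_norm_sq,
      ← Complex.normSq_eq_norm_sq]
    gcongr
    · simp
    · simp only [Complex.normSq_apply, Complex.sub_re, Complex.sub_im, Complex.add_re,
        Complex.add_im]
      nlinarith
  by_contra! h
  nlinarith [norm_nonneg (z - S z)]

theorem one_sub_mul_ne_zero {w ζ : ℂ} (hw : ‖w‖ < 1) (hζ : ‖ζ‖ ≤ 1) : 1 - w * ζ ≠ 0 := by
  intro h
  have h1 := congrArg norm (sub_eq_zero.1 h)
  rw [norm_one, norm_mul] at h1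
  nlinarith [norm_nonneg w, norm_nonneg ζ]

theorem norm_exp_neg_mul_I (θ : ℝ) : ‖Complex.exp (-(θ * Complex.I))‖ = 1 := by
  rw [← neg_mul, ← Complex.ofReal_neg, Complex.norm_exp_ofReal_mul_I]

theorem continuous_inv_one_sub_exp {w : ℂ} (hw : ‖w‖ < 1) :
    Continuous fun θ : ℝ => (1 - w * Complex.exp (θ * Complex.I))⁻¹ :=
  Continuous.inv₀ (by fun_prop) fun θ =>
    one_sub_mul_ne_zero hw (Complex.norm_exp_ofReal_mul_I θ).le

theorem continuous_inv_one_sub_exp_neg {w : ℂ} (hw : ‖w‖ < 1) :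
    Continuous fun θ : ℝ => (1 - w * Complex.exp (-(θ * Complex.I)))⁻¹ :=
  Continuous.inv₀ (by fun_prop) fun θ => one_sub_mul_ne_zero hw (norm_exp_neg_mul_I θ).le

/-- The mean value property of `ζ ↦ 1 / (1 - w ζ)` on the unit circle, with the lower half circle
folded onto the upper one. -/
theorem integral_inv_one_sub_exp {w : ℂ} (hw : ‖w‖ < 1) :
    ∫ θ in (0 : ℝ)..Real.pi, ((1 - w * Complex.exp (θ * Complex.I))⁻¹ +
      (1 - w * Complex.exp (-(θ * Complex.I)))⁻¹) = 2 * Real.pi := by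
  have hc := continuous_inv_one_sub_exp hw
  have hc' := continuous_inv_one_sub_exp_neg hw
  have hd : DifferentiableOn ℂ (fun ζ : ℂ => (1 - w * ζ)⁻¹) (Metric.closedBall 0 |(1 : ℝ)|) := by
    refine DifferentiableOn.inv (by fun_prop) fun ζ hζ => one_sub_mul_ne_zero hw ?_
    simpa using hζ
  have hm := (hd.diffContOnCl_ball subset_rfl).circleAverage
  simp only [Real.circleAverage_def, circleMap, Complex.ofReal_one, one_mul, zero_add, mul_zero,
    sub_zero, inv_one, Complex.real_smul] at hm
  have hpi : (Real.pi : ℂ) ≠ 0 := by exact_mod_cast Real.pi_ne_zero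
  have hfull : ∫ θ in (0 : ℝ)..2 * Real.pi, (1 - w * Complex.exp (θ * Complex.I))⁻¹
      = 2 * Real.pi := by
    push_cast at hm
    field_simp at hm
    simpa [mul_comm] using hm
  have hrefl : ∫ θ in (0 : ℝ)..Real.pi, (1 - w * Complex.exp (-(θ * Complex.I)))⁻¹
      = ∫ θ in Real.pi..2 * Real.pi, (1 - w * Complex.exp (θ * Complex.I))⁻¹ := by
    have := intervalIntegral.integral_comp_sub_left (a := 0) (b := Real.pi)
      (fun θ : ℝ => (1 - w * Complex.exp (θ * Complex.I))⁻¹) (2 * Real.pi)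
    rw [sub_zero, show 2 * Real.pi - Real.pi = Real.pi by ring] at this
    rw [← this]
    congr 1
    funext θ
    have he : Complex.exp (((2 * Real.pi - θ : ℝ) : ℂ) * Complex.I)
        = Complex.exp (-(θ * Complex.I)) := by
      push_cast
      rw [sub_mul, sub_eq_add_neg, Complex.exp_add, Complex.exp_two_pi_mul_I, one_mul]
    rw [he]
  rw [intervalIntegral.integral_add (hc.intervalIntegrable _ _) (hc'.intervalIntegrable _ _), hrefl,
    intervalIntegral.integral_add_adjacent_intervals (hc.intervalIntegrable _ _)
      (hc.intervalIntegrable _ _), hfull]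

theorem sub_cos_ne_zero {z : ℂ} (hz : z ∉ realSeg) (θ : ℝ) : z - (Real.cos θ : ℂ) ≠ 0 := by
  intro h
  apply hz
  rw [sub_eq_zero.1 h]
  exact ⟨Complex.ofReal_im _, by simpa only [Complex.ofReal_re] using Real.neg_one_le_cos θ,
    by simpa only [Complex.ofReal_re] using Real.cos_le_one θ⟩

/-- The partial fraction decomposition of `1 / (z - cos θ)` in `e^{iθ}`. -/
theorem inv_sub_cos_eq {z : ℂ} (hz : z ∉ realSeg) (θ : ℝ) :
    (z - (Real.cos θ : ℂ))⁻¹ = (S z)⁻¹ * ((1 - (z - S z) * Complex.exp (θ * Complex.I))⁻¹ +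
      (1 - (z - S z) * Complex.exp (-(θ * Complex.I)))⁻¹ - 1) := by
  have hw := norm_sub_S_lt_one hz
  have h1 := one_sub_mul_ne_zero hw (Complex.norm_exp_ofReal_mul_I θ).le
  have h2 := one_sub_mul_ne_zero hw (norm_exp_neg_mul_I θ).le
  have h3 := sub_cos_ne_zero hz θ
  have h4 := S_ne_zero hz
  have hS := S_sq z
  have hcos : (Real.cos θ : ℂ)
      = (Complex.exp (θ * Complex.I) + Complex.exp (-(θ * Complex.I))) / 2 := by
    rw [Complex.ofReal_cos, Complex.cos, neg_mul]
  have hee : Complex.exp (θ * Complex.I) * Complex.exp (-(θ * Complex.I)) = 1 := by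
    rw [← Complex.exp_add, add_neg_cancel, Complex.exp_zero]
  rw [hcos] at h3 ⊢
  generalize Complex.exp (θ * Complex.I) = e at *
  generalize Complex.exp (-(θ * Complex.I)) = f at *
  generalize S z = σ at *
  have hprod : (1 - (z - σ) * e) * (1 - (z - σ) * f) = 2 * (z - σ) * (z - (e + f) / 2) := by
    linear_combination (z - σ) ^ 2 * hee + hS
  have hnum : (1 - (z - σ) * f) + (1 - (z - σ) * e) - (1 - (z - σ) * e) * (1 - (z - σ) * f)
      = 2 * (z - σ) * σ := by
    linear_combination -(z - σ) ^ 2 * hee + hS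
  have hsum : (1 - (z - σ) * e)⁻¹ + (1 - (z - σ) * f)⁻¹ - 1
      = (2 * (z - σ) * σ) / ((1 - (z - σ) * e) * (1 - (z - σ) * f)) := by
    rw [← hnum]; field_simp
  have hw0 : z - σ ≠ 0 := by
    intro h
    rw [h] at hprod
    simp at hprod
  rw [hsum, hprod]
  field_simp

theorem integral_inv_sub_cos {z : ℂ} (hz : z ∉ realSeg) :
    ∫ θ in (0 : ℝ)..Real.pi, (z - (Real.cos θ : ℂ))⁻¹ = Real.pi / S z := by
  have hw := norm_sub_S_lt_one hz
  have hc : Continuous fun θ : ℝ => (1 - (z - S z) * Complex.exp (θ * Complex.I))⁻¹ +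
      (1 - (z - S z) * Complex.exp (-(θ * Complex.I)))⁻¹ :=
    (continuous_inv_one_sub_exp hw).add (continuous_inv_one_sub_exp_neg hw)
  simp_rw [inv_sub_cos_eq hz]
  rw [intervalIntegral.integral_const_mul, intervalIntegral.integral_sub
    (hc.intervalIntegrable _ _) (by simp), integral_inv_one_sub_exp hw]
  simp
  ring

/-- The substitution `s = cos θ`. No integrability is needed: the change of variables formula holds
with both sides read as Bochner integrals. -/
theorem integral_div_sqrt_eq_integral_cos (f : ℝ → ℂ) :
    ∫ s in (-1 : ℝ)..1, f s / (Real.sqrt (1 - s ^ 2) : ℂ)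
      = ∫ θ in (0 : ℝ)..Real.pi, f (Real.cos θ) := by
  have himg : Real.cos '' Set.Ioo 0 Real.pi = Set.Ioo (-1) 1 := by
    ext s
    constructor
    · rintro ⟨θ, hθ, rfl⟩
      have h0 := Real.strictAntiOn_cos ⟨le_rfl, Real.pi_pos.le⟩ ⟨hθ.1.le, hθ.2.le⟩ hθ.1
      have h1 := Real.strictAntiOn_cos ⟨hθ.1.le, hθ.2.le⟩ ⟨Real.pi_pos.le, le_rfl⟩ hθ.2
      rw [Real.cos_zero] at h0
      rw [Real.cos_pi] at h1
      exact ⟨h1, h0⟩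
    · intro hs
      exact ⟨Real.arccos s, ⟨Real.arccos_pos.2 hs.2, Real.arccos_lt_pi.2 hs.1⟩,
        Real.cos_arccos hs.1.le hs.2.le⟩
  have hinj : Set.InjOn Real.cos (Set.Ioo 0 Real.pi) :=
    Real.injOn_cos.mono Set.Ioo_subset_Icc_self
  rw [intervalIntegral.integral_of_le (by norm_num), intervalIntegral.integral_of_le
    Real.pi_pos.le, integral_Ioc_eq_integral_Ioo, integral_Ioc_eq_integral_Ioo, ← himg,
    integral_image_eq_integral_abs_deriv_smul measurableSet_Ioo
      (fun θ _ => (Real.hasDerivAt_cos θ).hasDerivWithinAt) hinj]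
  refine setIntegral_congr_fun measurableSet_Ioo fun θ hθ => ?_
  have hsin : 0 < Real.sin θ := Real.sin_pos_of_pos_of_lt_pi hθ.1 hθ.2
  have hsin' : (Real.sin θ : ℂ) ≠ 0 := by exact_mod_cast hsin.ne'
  simp only [Complex.real_smul]
  rw [← Real.sin_sq, Real.sqrt_sq hsin.le, abs_neg, abs_of_pos hsin, mul_div_cancel₀ _ hsin']

theorem integral_cauchy_arcsine {z : ℂ} (hz : z ∉ realSeg) :
    (∫ s in (-1 : ℝ)..1, (s : ℂ) / ((Real.sqrt (1 - s ^ 2) : ℂ) * (z - s)))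
      = (Real.pi : ℂ) * (z / S z - 1) := by
  have h := integral_div_sqrt_eq_integral_cos fun s : ℝ => (s : ℂ) / (z - s)
  simp_rw [div_div, mul_comm (z - _)] at h
  rw [h]
  have hpt : ∀ θ : ℝ, (Real.cos θ : ℂ) / (z - (Real.cos θ : ℂ))
      = z * (z - (Real.cos θ : ℂ))⁻¹ - 1 := by
    intro θ
    have := sub_cos_ne_zero hz θ
    field_simp
    ring
  have hc : Continuous fun θ : ℝ => z * (z - (Real.cos θ : ℂ))⁻¹ :=
    continuous_const.mul (Continuous.inv₀ (by fun_prop) (sub_cos_ne_zero hz))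
  simp_rw [hpt]
  rw [intervalIntegral.integral_sub (hc.intervalIntegrable _ _) (by simp),
    intervalIntegral.integral_const_mul, integral_inv_sub_cos hz]
  simp
  ring

/-- For `z ∉ [−1,1]`, `∫_{−1}^{1} s/(√(1−s²)(z−s)) ds = π(z/S(z) − 1) = π(z − S(z))/S(z)`;
consequently the Szegő function of `e^{iωx}`, defined by the integral formula,
equals `exp(iω/(2(z + S(z))))`. -/
theorem stmt16 (z : ℂ) (hz : z ∉ realSeg) (ω : ℝ) (hω : 0 < ω) :
    (∫ s in (-1 : ℝ)..1, (s : ℂ) / ((Real.sqrt (1 - s ^ 2) : ℂ) * (z - s)))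
      = (Real.pi : ℂ) * (z / S z - 1) ∧
    (Real.pi : ℂ) * (z / S z - 1) = (Real.pi : ℂ) * (z - S z) / S z ∧
    Complex.exp ((S z / (2 * (Real.pi : ℂ))) *
        ∫ s in (-1 : ℝ)..1,
          (Complex.I * (ω : ℂ) * (s : ℂ)) / ((Real.sqrt (1 - s ^ 2) : ℂ) * (z - s)))
      = Complex.exp (Complex.I * (ω : ℂ) / (2 * (z + S z))) := by
  have hS := S_ne_zero hz
  have hpi : (Real.pi : ℂ) ≠ 0 := by exact_mod_cast Real.pi_ne_zero
  refine ⟨integral_cauchy_arcsine hz, by field_simp, ?_⟩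
  simp_rw [mul_div_assoc (Complex.I * (ω : ℂ))]
  rw [intervalIntegral.integral_const_mul, integral_cauchy_arcsine hz]
  have hmul := sub_S_mul_add_S z
  have hne : z + S z ≠ 0 := right_ne_zero_of_mul (hmul ▸ one_ne_zero)
  congr 1
  field_simp
  linear_combination ω * hmul
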